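/- arXiv:1601.05595 — 4 statements merged into one kernel-verified Lean document; each statement's English description precedes it below -/
import Mathlib

section
/- (General upper bound) Let C be a q-ary (n,k,r) LRC with all symbol locality, where k ≥ 1 and r ≥ 1, and let d be its minimum distance. Then d ≤ min over integers t with 1 ≤ t ≤ ⌈k/r⌉ − 1 of d_opt^{(q)}(n − t(r+1), k − tr), where d_opt^{(q)}(n*, k*) denotes the maximum possible minimum distance of a q-ary linear code of length n* and dimension k*. -/
/-- Coordinate `i` of the linear code `C` has locality `r`. -/
def HasLocality {F ι : Type*} [Field F] [Fintype ι]
    (C : Submodule F (ι → F)) (i : ι) (r : ℕ) : Prop :=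
  ∃ R : Finset ι, i ∉ R ∧ R.card ≤ r ∧
    ∀ c ∈ C, ∀ c' ∈ C, (∀ j ∈ R, c j = c' j) → c i = c' i

/-- The minimum distance of a linear code: the least Hamming weight of a nonzero codeword. -/
noncomputable def minDist {F ι : Type*} [Field F] [Fintype ι] [DecidableEq F]
    (C : Submodule F (ι → F)) : ℕ :=
  sInf {w | ∃ c ∈ C, c ≠ 0 ∧ hammingNorm c = w}

/-- `dOpt F n k` is the largest possible minimum distance of a linear code over `F`
of length `n` and dimension `k`. -/
noncomputable def dOpt (F : Type*) [Field F] [Fintype F] [DecidableEq F] (n k : ℕ) : ℕ :=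
  sSup {d | ∃ C : Submodule F (Fin n → F), Module.finrank F C = k ∧ minDist C = d}

/-! The words of `C` vanishing on a set `I` of coordinates form a subcode. Adding a coordinate to
`I` lowers its dimension by at most one, and not at all if `I` contains a recovery set of that
coordinate. Adding a coordinate together with its recovery set, `t` times over, therefore gives
`t * (r + 1)` coordinates which cost only `t * r` dimensions. Deleting them from the words vanishing
there preserves weights and leaves a code of length `n - t * (r + 1)`. -/

open Module (finrank)

section VanishingSubcode

variable {F ι : Type*} [Field F]

/-- The subcode of the words of `C` that vanish on `I`: the code `C` shortened at `I`, except that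
the zero coordinates in `I` are kept. -/
def vanishingSubcode (C : Submodule F (ι → F)) (I : Finset ι) : Submodule F (ι → F) :=
  C ⊓ Submodule.pi I fun _ => ⊥

variable {C : Submodule F (ι → F)} {I J : Finset ι} {c : ι → F}

theorem mem_vanishingSubcode : c ∈ vanishingSubcode C I ↔ c ∈ C ∧ ∀ i ∈ I, c i = 0 :=
  Iff.rfl

theorem vanishingSubcode_le : vanishingSubcode C I ≤ C :=
  inf_le_left

theorem vanishingSubcode_empty (C : Submodule F (ι → F)) : vanishingSubcode C ∅ = C := by
  simp [vanishingSubcode]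

theorem vanishingSubcode_univ [Fintype ι] (C : Submodule F (ι → F)) :
    vanishingSubcode C Finset.univ = ⊥ :=
  eq_bot_iff.2 fun _ hc => funext fun i => hc.2 i (Finset.mem_univ i)

theorem finrank_vanishingSubcode_add_card_mono (C : Submodule F (ι → F)) [FiniteDimensional F C]
    (hIJ : I ⊆ J) :
    finrank F (vanishingSubcode C I) + I.card ≤ finrank F (vanishingSubcode C J) + J.card := by
  classical
  have : FiniteDimensional F (vanishingSubcode C I) :=
    Submodule.finiteDimensional_of_le vanishingSubcode_le
  have : FiniteDimensional F (vanishingSubcode C J) :=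
    Submodule.finiteDimensional_of_le vanishingSubcode_le
  let restrict : vanishingSubcode C I →ₗ[F] (↥(J \ I) → F) :=
    (LinearMap.funLeft F F Subtype.val).domRestrict _
  have hrange : finrank F (LinearMap.range restrict) ≤ (J \ I).card := by
    simpa using Submodule.finrank_le (LinearMap.range restrict)
  have hker : finrank F (LinearMap.ker restrict) ≤ finrank F (vanishingSubcode C J) := by
    rw [← Submodule.finrank_map_subtype_eq]
    refine Submodule.finrank_mono ?_
    rintro _ ⟨c, hc, rfl⟩
    refine ⟨c.2.1, fun i hi => ?_⟩
    by_cases hiI : i ∈ I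
    · exact c.2.2 i hiI
    · exact congrFun hc ⟨i, Finset.mem_sdiff.2 ⟨hi, hiI⟩⟩
  have hrank := restrict.finrank_range_add_finrank_ker
  have hcard := Finset.card_sdiff_add_card_eq_card hIJ
  omega

end VanishingSubcode

section Locality

variable {F ι : Type*} [Field F] [Fintype ι] {C : Submodule F (ι → F)} {r t : ℕ}

/-- The code `C` has information locality `r`: its coordinates of locality `r` contain an
information set, which is encoded as the injectivity of the restriction of `C` to them. -/
def HasInformationLocality (C : Submodule F (ι → F)) (r : ℕ) : Prop :=
  ∀ c ∈ C, (∀ i, HasLocality C i r → c i = 0) → c = 0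

theorem HasInformationLocality.of_forall_hasLocality (h : ∀ i, HasLocality C i r) :
    HasInformationLocality C r :=
  fun _ _ hc => funext fun i => hc i (h i)

theorem HasLocality.exists_vanishingSubcode_insert_eq [DecidableEq ι] {i : ι}
    (h : HasLocality C i r) :
    ∃ R : Finset ι, i ∉ R ∧ R.card ≤ r ∧
      ∀ I, R ⊆ I → vanishingSubcode C (insert i I) = vanishingSubcode C I := by
  obtain ⟨R, hiR, hRr, hrecover⟩ := h
  refine ⟨R, hiR, hRr, fun I hRI => ?_⟩
  ext c
  simp only [mem_vanishingSubcode, Finset.forall_mem_insert]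
  refine and_congr_right fun hcC => and_iff_right_of_imp fun hcI => ?_
  exact hrecover c hcC 0 C.zero_mem fun j hj => hcI j (hRI hj)

theorem HasInformationLocality.exists_finrank_add_le_finrank_vanishingSubcode_add_card
    (h : HasInformationLocality C r) (ht : t * r < finrank F C) :
    ∃ I : Finset ι, I.card ≤ t * (r + 1) ∧
      finrank F C + t ≤ finrank F (vanishingSubcode C I) + I.card := by
  classical
  induction t with
  | zero => exact ⟨∅, by simp, by rw [vanishingSubcode_empty]; simp⟩
  | succ t ih =>
    rw [Nat.succ_mul] at ht
    obtain ⟨I, hIcard, hIrank⟩ := ih (by omega)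
    have hne : vanishingSubcode C I ≠ ⊥ := by
      rw [← Submodule.one_le_finrank_iff]
      rw [Nat.mul_succ] at hIcard
      omega
    obtain ⟨c, hcCI, hc⟩ := Submodule.exists_mem_ne_zero_of_ne_bot hne
    obtain ⟨hcC, hcI⟩ := mem_vanishingSubcode.1 hcCI
    obtain ⟨i, hi, hci⟩ : ∃ i, HasLocality C i r ∧ c i ≠ 0 := by
      by_contra! hzero
      exact hc (h c hcC hzero)
    obtain ⟨R, hiR, hRr, hinsert⟩ := hi.exists_vanishingSubcode_insert_eq
    have hiIR : i ∉ I ∪ R := by simp [mt (hcI i) hci, hiR]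
    have hrank := finrank_vanishingSubcode_add_card_mono C (I.subset_union_left (s₂ := R))
    have hcard := Finset.card_union_le I R
    refine ⟨insert i (I ∪ R), ?_, ?_⟩
    · rw [Finset.card_insert_of_notMem hiIR, Nat.succ_mul]
      omega
    · rw [hinsert _ Finset.subset_union_right, Finset.card_insert_of_notMem hiIR]
      omega

theorem HasInformationLocality.exists_finrank_sub_le_finrank_vanishingSubcode
    (h : HasInformationLocality C r) (ht : t * r < finrank F C) :
    ∃ I : Finset ι, I.card = t * (r + 1) ∧
      finrank F C - t * r ≤ finrank F (vanishingSubcode C I) := by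
  obtain ⟨I, hIcard, hIrank⟩ := h.exists_finrank_add_le_finrank_vanishingSubcode_add_card ht
  have hlength : t * (r + 1) ≤ Fintype.card ι := by
    have hmono := finrank_vanishingSubcode_add_card_mono C I.subset_univ
    rw [vanishingSubcode_univ, finrank_bot, Finset.card_univ] at hmono
    rw [Nat.mul_succ]
    omega
  obtain ⟨J, hIJ, hJcard⟩ := Finset.exists_superset_card_eq hIcard hlength
  refine ⟨J, hJcard, ?_⟩
  have hmono := finrank_vanishingSubcode_add_card_mono C hIJ
  rw [hJcard, Nat.mul_succ] at hmono
  omega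

end Locality

theorem hammingNorm_comp_of_injective {ι κ M : Type*} [Fintype ι] [Fintype κ] [Zero M]
    [DecidableEq M] {e : κ → ι} (he : Function.Injective e) {c : ι → M}
    (hc : ∀ i ∉ Set.range e, c i = 0) : hammingNorm (c ∘ e) = hammingNorm c := by
  refine Finset.card_nbij e (fun j hj => by simpa using hj) he.injOn fun i hi => ?_
  obtain ⟨j, rfl⟩ : i ∈ Set.range e := by
    by_contra hie
    exact (Finset.mem_filter.1 hi).2 (hc i hie)
  exact ⟨j, by simpa using hi, rfl⟩

theorem exists_submodule_le_finrank_eq {K V : Type*} [Ring K] [StrongRankCondition K]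
    [AddCommGroup V] [Module K V] {W : Submodule K V} {l : ℕ} (hl : l ≤ finrank K W) :
    ∃ U ≤ W, finrank K U = l := by
  have := nontrivial_of_invariantBasisNumber K
  obtain ⟨v, hv⟩ := exists_linearIndependent_of_le_finrank hl
  refine ⟨(Submodule.span K (Set.range v)).map W.subtype, Submodule.map_subtype_le _ _, ?_⟩
  rw [Submodule.finrank_map_subtype_eq, finrank_span_eq_card hv, Fintype.card_fin]

section MinDist

variable {F ι κ : Type*} [Field F] [DecidableEq F] [Fintype ι] [Fintype κ]
  {C D : Submodule F (ι → F)}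

theorem minDist_le_card (C : Submodule F (ι → F)) : minDist C ≤ Fintype.card ι := by
  obtain rfl | hC := eq_or_ne C ⊥
  · simp [minDist]
  · obtain ⟨c, hcC, hc⟩ := Submodule.exists_mem_ne_zero_of_ne_bot hC
    calc minDist C ≤ hammingNorm c := Nat.sInf_le ⟨c, hcC, hc, rfl⟩
      _ ≤ Fintype.card ι := hammingNorm_le_card_fintype

theorem minDist_le_minDist_of_le (hDC : D ≤ C) (hD : D ≠ ⊥) : minDist C ≤ minDist D := by
  obtain ⟨c, hcD, hc⟩ := Submodule.exists_mem_ne_zero_of_ne_bot hD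
  refine csInf_le_csInf (OrderBot.bddBelow _) ⟨_, c, hcD, hc, rfl⟩ ?_
  rintro _ ⟨b, hbD, hb, rfl⟩
  exact ⟨b, hDC hbD, hb, rfl⟩

theorem minDist_map_of_hammingNorm_eq {f : (ι → F) →ₗ[F] (κ → F)}
    (hf : ∀ c ∈ D, hammingNorm (f c) = hammingNorm c) : minDist (D.map f) = minDist D := by
  refine congrArg sInf (Set.ext fun w => ?_)
  simp only [Set.mem_ofPred_eq, Submodule.mem_map, exists_exists_and_eq_and]
  refine exists_congr fun c => and_congr_right fun hc => ?_
  rw [← hammingNorm_ne_zero_iff, ← hammingNorm_ne_zero_iff, hf c hc]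

theorem finrank_map_of_hammingNorm_eq {f : (ι → F) →ₗ[F] (κ → F)}
    (hf : ∀ c ∈ D, hammingNorm (f c) = hammingNorm c) : finrank F (D.map f) = finrank F D := by
  have hinj : Function.Injective (f.domRestrict D) := by
    refine (injective_iff_map_eq_zero _).2 fun c hc => Subtype.ext ?_
    rwa [LinearMap.domRestrict_apply, ← hammingNorm_eq_zero, hf c c.2, hammingNorm_eq_zero] at hc
  rw [← LinearMap.range_domRestrict, LinearMap.finrank_range_of_inj hinj]

theorem minDist_le_dOpt [Fintype F] {n : ℕ} (C : Submodule F (Fin n → F)) :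
    minDist C ≤ dOpt F n (finrank F C) := by
  refine le_csSup ⟨n, ?_⟩ ⟨C, rfl, rfl⟩
  rintro _ ⟨E, _, rfl⟩
  simpa using minDist_le_card E

theorem minDist_le_dOpt_of_forall_mem_eq_zero [Fintype F] {I : Finset ι}
    (hD : ∀ c ∈ D, ∀ i ∈ I, c i = 0) :
    minDist D ≤ dOpt F (Fintype.card ι - I.card) (finrank F D) := by
  classical
  let e : Fin (Fintype.card ι - I.card) → ι :=
    Subtype.val ∘ (Iᶜ.equivFinOfCardEq I.card_compl).symm
  have he : Function.Injective e := Subtype.val_injective.comp (Equiv.injective _)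
  have hrange : Set.range e = (Iᶜ : Finset ι) := by simp [e, Set.range_comp, Set.compl_def]
  have hnorm : ∀ c ∈ D, hammingNorm (LinearMap.funLeft F F e c) = hammingNorm c := fun c hc =>
    hammingNorm_comp_of_injective he fun i hi => hD c hc i (by simpa [hrange] using hi)
  rw [← minDist_map_of_hammingNorm_eq hnorm, ← finrank_map_of_hammingNorm_eq hnorm]
  exact minDist_le_dOpt _

end MinDist

theorem stmt_5_general {F ι : Type*} [Field F] [Fintype F] [DecidableEq F] [Fintype ι] {r t : ℕ}
    {C : Submodule F (ι → F)} (hC : HasInformationLocality C r) (ht : t * r < finrank F C) :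
    minDist C ≤ dOpt F (Fintype.card ι - t * (r + 1)) (finrank F C - t * r) := by
  obtain ⟨I, hIcard, hIrank⟩ := hC.exists_finrank_sub_le_finrank_vanishingSubcode ht
  obtain ⟨D, hDI, hDrank⟩ := exists_submodule_le_finrank_eq hIrank
  have hD : D ≠ ⊥ := by
    rw [← Submodule.one_le_finrank_iff]
    omega
  calc minDist C ≤ minDist D := minDist_le_minDist_of_le (hDI.trans vanishingSubcode_le) hD
    _ ≤ dOpt F (Fintype.card ι - I.card) (finrank F D) :=
      minDist_le_dOpt_of_forall_mem_eq_zero fun c hc => (hDI hc).2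
    _ = dOpt F (Fintype.card ι - t * (r + 1)) (finrank F C - t * r) := by rw [hIcard, hDrank]

theorem mul_lt_of_le_ceil_div_sub_one {k r t : ℕ} (hr : 0 < r)
    (ht : (t : ℤ) ≤ ⌈(k : ℚ) / r⌉ - 1) : t * r < k := by
  rw [Int.le_sub_one_iff, Int.lt_ceil, lt_div_iff₀ (by exact_mod_cast hr)] at ht
  exact_mod_cast ht

/-- General upper bound: for an `(n,k,r)` LRC with all symbol locality and minimum distance `d`,
`d ≤ d_opt^{(q)}(n - t(r+1), k - tr)` for every `t` with `1 ≤ t ≤ ⌈k/r⌉ - 1`. -/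
theorem stmt_5 {F : Type*} [Field F] [Fintype F] [DecidableEq F]
    {n k r : ℕ} (hk : 1 ≤ k) (hr : 1 ≤ r)
    (C : Submodule F (Fin n → F)) (hCk : Module.finrank F C = k)
    (hloc : ∀ i : Fin n, HasLocality C i r) :
    ∀ t : ℕ, 1 ≤ t → (t : ℤ) ≤ ⌈(k : ℚ) / r⌉ - 1 →
      minDist C ≤ dOpt F (n - t * (r + 1)) (k - t * r) := by
  intro t _ ht
  simpa [hCk] using stmt_5_general (.of_forall_hasLocality hloc)
    (hCk ▸ mul_lt_of_le_ceil_div_sub_one hr ht)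
end

section
/- Let C be a q-ary (n,k,r) LRC with all symbol locality and minimum distance d, with 1 ≤ r < k, r dividing k, and d = n − k − k/r + 2. Then for any k/r vectors of the dual code C⊥ that are linearly independent over F_q and each have Hamming weight at most r+1, their supports are pairwise disjoint and each of them has Hamming weight exactly r+1. -/
/-!
A nonzero codeword exists vanishing on any `T` that supports `t` independent dual words, provided
`|T| < k + t`: on `T` these dual words save `t` dimensions. If their supports could be covered by
such a `T`, enlarging it to size `k + t - 1` would give `d ≤ n - k - t + 1`. So when
`d = n - k - t + 2` the union of the supports has at least `k + t` elements; for `t = k / r` this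
is `t * (r + 1)`, the sum of the bounds on the weights, and equality holds throughout.
-/

open Module

section LinearCode

variable {F ι : Type*} [Field F] [Fintype ι]

/-- The dual code `C⊥`: the words orthogonal to every codeword of `C` under `∑ i, x i * y i`. -/
def dualCode (C : Submodule F (ι → F)) : Submodule F (ι → F) :=
  LinearMap.BilinForm.orthogonal (dotProductBilin F F) C

lemma mem_dualCode {C : Submodule F (ι → F)} {x : ι → F} :
    x ∈ dualCode C ↔ ∀ c ∈ C, c ⬝ᵥ x = 0 :=
  Iff.rfl

lemma le_dualCode_comm {C D : Submodule F (ι → F)} : C ≤ dualCode D ↔ D ≤ dualCode C := by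
  simp only [SetLike.le_def, mem_dualCode]
  constructor <;> exact fun h x hx y hy => dotProduct_comm x y ▸ h hy x hx

lemma finrank_add_finrank_dualCode (C : Submodule F (ι → F)) :
    finrank F C + finrank F (dualCode C) = Fintype.card ι := by
  have nondegenerate : (dotProductBilin F F : LinearMap.BilinForm F (ι → F)).Nondegenerate :=
    ⟨dotProduct_eq_zero, fun y hy => dotProduct_eq_zero y fun x => dotProduct_comm y x ▸ hy x⟩
  rw [dualCode, LinearMap.BilinForm.finrank_orthogonal nondegenerate,
    ← finrank_fintype_fun_eq_card F]
  exact Nat.add_sub_cancel' C.finrank_le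

lemma spanSubset_compl_le_dualCode (T : Set ι) :
    Pi.spanSubset F Tᶜ ≤ dualCode (Pi.spanSubset F T) := by
  intro x hx y hy
  rw [Pi.mem_spanSubset_iff] at hx hy
  refine Finset.sum_eq_zero fun j _ => ?_
  by_cases hj : j ∈ T
  · simp [hx j (Set.notMem_compl_iff.2 hj)]
  · simp [hy j hj]

-- `C` and the words vanishing on `T` both lie in `dualCode D`, too small for them to be disjoint.
lemma inf_spanSubset_compl_ne_bot {C D : Submodule F (ι → F)} {T : Set ι}
    (hDC : D ≤ dualCode C) (hDT : D ≤ Pi.spanSubset F T)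
    (hT : T.ncard < finrank F C + finrank F D) :
    C ⊓ Pi.spanSubset F Tᶜ ≠ ⊥ := by
  intro hbot
  have hsup : C ⊔ Pi.spanSubset F Tᶜ ≤ dualCode D :=
    sup_le (le_dualCode_comm.2 hDC)
      (le_dualCode_comm.2 (hDT.trans (le_dualCode_comm.1 (spanSubset_compl_le_dualCode T))))
  have hsum := Submodule.finrank_sup_add_finrank_inf_eq C (Pi.spanSubset F Tᶜ)
  rw [hbot, finrank_bot, Pi.dim_spanSubset] at hsum
  have hle := Submodule.finrank_mono hsup
  have hdual := finrank_add_finrank_dualCode D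
  have hcompl := Set.ncard_add_ncard_compl T
  rw [Nat.card_eq_fintype_card] at hcompl
  omega

variable [DecidableEq F]

lemma hammingNorm_eq_ncard_support (x : ι → F) :
    hammingNorm x = (Function.support x).ncard := by
  rw [hammingNorm, ← Set.ncard_coe_finset, Finset.coe_filter_univ, Function.support]

lemma minDist_le_ncard_of_inf_spanSubset_ne_bot {C : Submodule F (ι → F)} {S : Set ι}
    (hCS : C ⊓ Pi.spanSubset F S ≠ ⊥) : minDist C ≤ S.ncard := by
  obtain ⟨c, ⟨hcC, hcS⟩, hc⟩ := Submodule.exists_mem_ne_zero_of_ne_bot hCS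
  calc minDist C ≤ hammingNorm c := Nat.sInf_le ⟨c, hcC, hc, rfl⟩
    _ = (Function.support c).ncard := hammingNorm_eq_ncard_support c
    _ ≤ S.ncard := Set.ncard_le_ncard (Function.support_subset_iff'.2 (Pi.mem_spanSubset_iff.1 hcS))

-- For `D = ⊥` and `S = ∅` this is the Singleton bound.
lemma minDist_add_finrank_add_finrank_le {C D : Submodule F (ι → F)} {S : Set ι}
    (hDC : D ≤ dualCode C) (hDS : D ≤ Pi.spanSubset F S)
    (hS : S.ncard < finrank F C + finrank F D) :
    minDist C + finrank F C + finrank F D ≤ Fintype.card ι + 1 := by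
  have hn : finrank F C + finrank F D ≤ Fintype.card ι := by
    grw [← finrank_add_finrank_dualCode C, Submodule.finrank_mono hDC]
  obtain ⟨T, hST, -, hT⟩ := Set.exists_subsuperset_card_eq S.subset_univ
    (Nat.le_sub_one_of_lt hS) (by rw [Set.ncard_univ, Nat.card_eq_fintype_card]; omega)
  have hDT : D ≤ Pi.spanSubset F T :=
    hDS.trans (Submodule.span_mono (Set.image_mono hST))
  have hmin := minDist_le_ncard_of_inf_spanSubset_ne_bot
    (inf_spanSubset_compl_ne_bot hDC hDT (by omega))
  have hcompl := Set.ncard_add_ncard_compl T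
  rw [Nat.card_eq_fintype_card] at hcompl
  omega

end LinearCode

section Union

variable {α κ : Type*} [Finite α] [Fintype κ] {s : κ → Set α}

lemma pairwise_disjoint_of_sum_ncard_le_ncard_iUnion
    (h : ∑ a, (s a).ncard ≤ (⋃ a, s a).ncard) : Pairwise (Function.onFun Disjoint s) := by
  classical
  intro a b hab
  by_contra hmeet
  -- Deleting `s b` from `s a` keeps the union but makes the sum of the sizes smaller.
  let s' : κ → Set α := Function.update s a (s a \ s b)
  have hunion : ⋃ i, s i ⊆ ⋃ i, s' i := by
    refine Set.iUnion_subset fun i x hx => Set.mem_iUnion.2 ?_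
    by_cases hxb : x ∈ s b
    · exact ⟨b, by simpa [s', hab.symm] using hxb⟩
    · refine ⟨i, ?_⟩
      by_cases hi : i = a
      · subst hi
        simpa [s'] using ⟨hx, hxb⟩
      · simpa [s', hi] using hx
  have hlt : ∑ i, (s' i).ncard < ∑ i, (s i).ncard := by
    have hle : s' ≤ s := update_le_self_iff.2 Set.sdiff_subset
    have hss : s' a ⊂ s a := by
      simpa [s', Set.sdiff_ssubset_left_iff, Set.not_disjoint_iff_nonempty_inter] using hmeet
    exact Finset.sum_lt_sum (fun i _ => Set.ncard_le_ncard (hle i))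
      ⟨a, Finset.mem_univ a, Set.ncard_lt_ncard hss⟩
  exact (h.trans (Set.ncard_le_ncard hunion)).not_gt
    ((Set.ncard_iUnion_le_of_fintype s').trans_lt hlt)

lemma pairwise_disjoint_and_ncard_eq_of_sum_le_ncard_iUnion {w : κ → ℕ}
    (hs : ∀ a, (s a).ncard ≤ w a) (h : ∑ a, w a ≤ (⋃ a, s a).ncard) :
    Pairwise (Function.onFun Disjoint s) ∧ ∀ a, (s a).ncard = w a := by
  have hsum : ∑ a, (s a).ncard ≤ ∑ a, w a := Finset.sum_le_sum fun a _ => hs a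
  refine ⟨pairwise_disjoint_of_sum_ncard_le_ncard_iUnion (hsum.trans h), fun a => ?_⟩
  have hsum_eq := hsum.antisymm (h.trans (Set.ncard_iUnion_le_of_fintype s))
  exact (Finset.sum_eq_sum_iff_of_le fun a _ => hs a).1 hsum_eq a (Finset.mem_univ a)

end Union

theorem stmt_8_general {F ι κ : Type*} [Field F] [DecidableEq F] [Fintype ι] [Fintype κ] {r : ℕ}
    (C : Submodule F (ι → F)) (hk : Fintype.card κ * r ≤ finrank F C)
    (hd : Fintype.card ι + 2 ≤ minDist C + finrank F C + Fintype.card κ)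
    (h : κ → ι → F) (hdual : ∀ a, h a ∈ dualCode C) (hind : LinearIndependent F h)
    (hwt : ∀ a, hammingNorm (h a) ≤ r + 1) :
    Pairwise (Function.onFun Disjoint fun a => Function.support (h a)) ∧
      ∀ a, hammingNorm (h a) = r + 1 := by
  let D := Submodule.span F (Set.range h)
  have hDC : D ≤ dualCode C := Submodule.span_le.2 (Set.range_subset_iff.2 hdual)
  have hDS : D ≤ Pi.spanSubset F (⋃ a, Function.support (h a)) :=
    Submodule.span_le.2 <| Set.range_subset_iff.2 fun a => Pi.mem_spanSubset_iff.2 <|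
      Function.support_subset_iff'.1 (Set.subset_iUnion_of_subset a subset_rfl)
  have hD : finrank F D = Fintype.card κ := finrank_span_eq_card hind
  have hunion : finrank F C + Fintype.card κ ≤ (⋃ a, Function.support (h a)).ncard := by
    by_contra! hlt
    have hsingleton := minDist_add_finrank_add_finrank_le hDC hDS (by rwa [hD])
    omega
  simp only [hammingNorm_eq_ncard_support] at hwt ⊢
  refine pairwise_disjoint_and_ncard_eq_of_sum_le_ncard_iUnion hwt ?_
  rw [Finset.sum_const, Finset.card_univ, smul_eq_mul, mul_add_one]
  omega

/-- For an `(n,k,r)` LRC with all symbol locality, `1 ≤ r < k`, `r ∣ k`, meeting the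
Singleton-like bound `d = n - k - k/r + 2`: any `k/r` linearly independent dual codewords,
each of Hamming weight at most `r+1`, have pairwise disjoint supports and weight exactly
`r+1`. -/
theorem stmt_8 {F : Type*} [Field F] [Fintype F] [DecidableEq F]
    {n k r : ℕ} (hr : 1 ≤ r) (hrk : r < k) (hdvd : r ∣ k)
    (C : Submodule F (Fin n → F)) (hCk : Module.finrank F C = k)
    (hloc : ∀ i : Fin n, HasLocality C i r)
    (hd : (minDist C : ℤ) = (n : ℤ) - k - (k / r : ℕ) + 2)
    (h : Fin (k / r) → Fin n → F)
    (hdual : ∀ a, ∀ c ∈ C, ∑ j, c j * h a j = 0)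
    (hind : LinearIndependent F h)
    (hwt : ∀ a, hammingNorm (h a) ≤ r + 1) :
    (∀ a b, a ≠ b → Disjoint (Function.support (h a)) (Function.support (h b))) ∧
    (∀ a, hammingNorm (h a) = r + 1) := by
  obtain ⟨hdisj, hcard⟩ := stmt_8_general C (by simpa [hCk] using Nat.div_mul_le_self k r)
    (by rw [Fintype.card_fin, Fintype.card_fin]; omega) h hdual hind hwt
  exact ⟨fun _ _ hab => hdisj hab, hcard⟩
end

section
/- Let C be a q-ary (n,k,r) LRC with all symbol locality and minimum distance d, with 1 ≤ r < k, r not dividing k, and d = n − k − ⌈k/r⌉ + 2. Then for any ⌈k/r⌉ vectors of the dual code C⊥ that are linearly independent over F_q and each have Hamming weight at most r+1, the union of their supports contains at least k + ⌈k/r⌉ coordinates. -/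
/-!
Let `m` independent dual codewords be supported in a set `T` of coordinates. All vectors vanishing
on `T` and all codewords of `C` are orthogonal to them, so they span together a space of dimension
at most `n - m`, and the codewords vanishing on `T` form a space of dimension at least
`(n - |T|) + k - (n - m) = k + m - |T|`. If the supports covered fewer than `k + m` coordinates, `T`
could be chosen with `|T| = k + m - 1`. Some nonzero codeword would then vanish on `T`, whence
`d ≤ n - k - m + 1`, one less than the Singleton-like bound.
-/

theorem ceil_natCast_div_natCast_eq_ceilDiv (K : Type*) [Field K] [LinearOrder K]
    [IsStrictOrderedRing K] [FloorRing K] (a b : ℕ) : ⌈(a : K) / b⌉ = (a ⌈/⌉ b : ℕ) := by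
  rcases b.eq_zero_or_pos with rfl | hb
  · simp
  rw [← Int.natCast_ceil_eq_ceil (by positivity), Nat.cast_inj]
  refine eq_of_forall_ge_iff fun c ↦ ?_
  rw [Nat.ceil_le, div_le_iff₀ (by exact_mod_cast hb), ceilDiv_le_iff_le_mul hb, mul_comm]
  exact_mod_cast Iff.rfl

section LinearCode

variable {F ι κ : Type*} [Field F]

variable (F) in
/-- The space of vectors that vanish at every coordinate in `T`. Its intersection with a code `C`
is `C` shortened at `T`, with the zero coordinates kept so that it remains a subspace of
`ι → F`. -/
def vanishingOn (T : Finset ι) : Submodule F (ι → F) :=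
  LinearMap.ker (LinearMap.funLeft F F ((↑) : T → ι))

theorem mem_vanishingOn {T : Finset ι} {x : ι → F} : x ∈ vanishingOn F T ↔ ∀ j ∈ T, x j = 0 := by
  simp [vanishingOn, funext_iff, LinearMap.funLeft_apply]

variable [Fintype ι]

theorem finrank_vanishingOn_add_card (T : Finset ι) :
    Module.finrank F (vanishingOn F T) + T.card = Fintype.card ι := by
  have hsurj := LinearMap.funLeft_surjective_of_injective F F ((↑) : T → ι) Subtype.val_injective
  have hrank := (LinearMap.funLeft F F ((↑) : T → ι)).finrank_range_add_finrank_ker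
  rw [LinearMap.range_eq_top.mpr hsurj, finrank_top, Module.finrank_fintype_fun_eq_card,
    Module.finrank_fintype_fun_eq_card, Fintype.card_coe, add_comm] at hrank
  exact hrank

theorem hammingNorm_add_card_le_of_mem_vanishingOn [DecidableEq F] {T : Finset ι}
    {x : ι → F} (hx : x ∈ vanishingOn F T) : hammingNorm x + T.card ≤ Fintype.card ι := by
  classical
  have hdisj : Disjoint (Finset.univ.filter fun j ↦ x j ≠ 0) T :=
    Finset.disjoint_left.mpr fun j hj hjT ↦
      (Finset.mem_filter.mp hj).2 (mem_vanishingOn.mp hx j hjT)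
  exact (Finset.card_union_of_disjoint hdisj).symm.trans_le (Finset.card_le_univ _)

variable {C : Submodule F (ι → F)}

theorem minDist_le_hammingNorm [DecidableEq F] {c : ι → F} (hc : c ∈ C) (hc0 : c ≠ 0) :
    minDist C ≤ hammingNorm c :=
  Nat.sInf_le ⟨c, hc, hc0, rfl⟩

theorem minDist_add_card_le_of_inf_vanishingOn_ne_bot [DecidableEq F] {T : Finset ι}
    (hT : C ⊓ vanishingOn F T ≠ ⊥) : minDist C + T.card ≤ Fintype.card ι := by
  obtain ⟨c, ⟨hcC, hcT⟩, hc0⟩ := Submodule.exists_mem_ne_zero_of_ne_bot hT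
  exact (Nat.add_le_add_right (minDist_le_hammingNorm hcC hc0) _).trans
    (hammingNorm_add_card_le_of_mem_vanishingOn hcT)

theorem vanishingOn_le_ker_mulVecLin {H : Matrix κ ι F} {T : Finset ι}
    (hsupp : ∀ a, ∀ j ∉ T, H a j = 0) : vanishingOn F T ≤ LinearMap.ker H.mulVecLin :=
  fun x hx ↦ funext fun a ↦ Finset.sum_eq_zero fun j _ ↦ by
    by_cases hj : j ∈ T
    · exact mul_eq_zero_of_right _ (mem_vanishingOn.mp hx j hj)
    · exact mul_eq_zero_of_left (hsupp a j hj) _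

variable [Fintype κ] {H : Matrix κ ι F}

theorem finrank_ker_mulVecLin_add_card (hH : LinearIndependent F H.row) :
    Module.finrank F (LinearMap.ker H.mulVecLin) + Fintype.card κ = Fintype.card ι := by
  have hrank := H.mulVecLin.finrank_range_add_finrank_ker
  rw [Module.finrank_fintype_fun_eq_card, ← Matrix.rank, hH.rank_matrix, add_comm] at hrank
  exact hrank

theorem finrank_add_card_le_of_le_ker_mulVecLin (hH : LinearIndependent F H.row)
    (hC : C ≤ LinearMap.ker H.mulVecLin) :
    Module.finrank F C + Fintype.card κ ≤ Fintype.card ι :=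
  (Nat.add_le_add_right (Submodule.finrank_mono hC) _).trans_eq
    (finrank_ker_mulVecLin_add_card hH)

theorem finrank_add_card_le_finrank_inf_vanishingOn_add_card (hH : LinearIndependent F H.row)
    (hC : C ≤ LinearMap.ker H.mulVecLin) {T : Finset ι} (hsupp : ∀ a, ∀ j ∉ T, H a j = 0) :
    Module.finrank F C + Fintype.card κ ≤
      Module.finrank F (C ⊓ vanishingOn F T : Submodule F (ι → F)) + T.card := by
  have hsup : Module.finrank F (C ⊔ vanishingOn F T : Submodule F (ι → F)) + Fintype.card κ ≤
      Fintype.card ι :=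
    finrank_add_card_le_of_le_ker_mulVecLin hH (sup_le hC (vanishingOn_le_ker_mulVecLin hsupp))
  have hsup_inf := Submodule.finrank_sup_add_finrank_inf_eq C (vanishingOn F T)
  have hvanish := finrank_vanishingOn_add_card (F := F) T
  omega

theorem minDist_add_card_le_of_card_lt [DecidableEq F] (hH : LinearIndependent F H.row)
    (hC : C ≤ LinearMap.ker H.mulVecLin) {T : Finset ι} (hsupp : ∀ a, ∀ j ∉ T, H a j = 0)
    (hT : T.card < Module.finrank F C + Fintype.card κ) :
    minDist C + T.card ≤ Fintype.card ι := by
  refine minDist_add_card_le_of_inf_vanishingOn_ne_bot fun hbot ↦ ?_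
  have hshort := finrank_add_card_le_finrank_inf_vanishingOn_add_card hH hC hsupp
  rw [hbot, finrank_bot] at hshort
  omega

theorem stmt_9_general [DecidableEq F] {h : κ → ι → F}
    (hd : Fintype.card ι + 2 ≤ minDist C + Module.finrank F C + Fintype.card κ)
    (hdual : ∀ a, ∀ c ∈ C, ∑ j, c j * h a j = 0) (hind : LinearIndependent F h) :
    Module.finrank F C + Fintype.card κ ≤
      (Finset.univ.filter fun j : ι ↦ ∃ a, h a j ≠ 0).card := by
  by_contra! hlt
  have hC : C ≤ LinearMap.ker (Matrix.of h).mulVecLin := fun c hc ↦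
    funext fun a ↦ (dotProduct_comm (h a) c).trans (hdual a c hc)
  obtain ⟨T, hUT, -, hcard⟩ := Finset.exists_subsuperset_card_eq (Finset.subset_univ _)
    (Nat.le_sub_one_of_lt hlt)
    ((Nat.sub_le _ 1).trans (finrank_add_card_le_of_le_ker_mulVecLin hind hC))
  have hsupp : ∀ a, ∀ j ∉ T, h a j = 0 := fun a j hj ↦ by
    by_contra hne
    exact hj (hUT (Finset.mem_filter.mpr ⟨Finset.mem_univ j, a, hne⟩))
  have hbound := minDist_add_card_le_of_card_lt hind hC hsupp (by omega)
  omega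

end LinearCode

/-- For an `(n,k,r)` LRC with all symbol locality, `1 ≤ r < k`, `r ∤ k`, meeting the
Singleton-like bound `d = n - k - ⌈k/r⌉ + 2`: the supports of any `⌈k/r⌉` linearly independent
dual codewords of Hamming weight at most `r+1` cover at least `k + ⌈k/r⌉` coordinates. -/
theorem stmt_9 {F : Type*} [Field F] [Fintype F] [DecidableEq F]
    {n k r : ℕ} (hr : 1 ≤ r) (hrk : r < k) (hndvd : ¬ r ∣ k)
    (C : Submodule F (Fin n → F)) (hCk : Module.finrank F C = k)
    (hloc : ∀ i : Fin n, HasLocality C i r)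
    (hd : (minDist C : ℤ) = (n : ℤ) - k - ⌈(k : ℚ) / r⌉ + 2)
    (h : Fin (k ⌈/⌉ r) → Fin n → F)
    (hdual : ∀ a, ∀ c ∈ C, ∑ j, c j * h a j = 0)
    (hind : LinearIndependent F h)
    (hwt : ∀ a, hammingNorm (h a) ≤ r + 1) :
    k + k ⌈/⌉ r ≤ (Finset.univ.filter fun j : Fin n => ∃ a, h a j ≠ 0).card := by
  rw [ceil_natCast_div_natCast_eq_ceilDiv] at hd
  simpa [hCk] using stmt_9_general (by simp only [hCk, Fintype.card_fin]; omega) hdual hind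
end

section
/- Let q be a prime power, F_{q^m} an extension field of F_q, and let l ≥ 1, r ≥ 1, s ≥ 0. Set n = l(r+1) and k = n − l − s − 1, and assume k ≥ 1. Let α_{i,j} ∈ F_{q^m} for i ∈ {1,…,l}, j ∈ {1,…,r+1}, and suppose the elements {α_{i,j} − α_{i,r+1} : i ∈ {1,…,l}, j ∈ {1,…,r}} are linearly independent over F_q. Let H be the (l+s+1)×n matrix over F_{q^m} whose columns are indexed by pairs (i,j) with i ∈ {1,…,l}, j ∈ {1,…,r+1}, such that for i' ∈ {1,…,l} the entry of row i' in column (i,j) equals 1 if i = i' and 0 otherwise, and for e ∈ {0,1,…,s} the entry of row l+1+e in column (i,j) equals α_{i,j}^{q^e}. Then any n − k − ⌈k/r⌉ + 1 columns of H are linearly independent over F_{q^m}. -/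
/-!
Fix one representative column in every block met by `S` and subtract it from the other columns of
its block. This clears the locality rows of all non-representatives, and since Frobenius is
additive, it turns their Moore rows into the Moore columns of the differences `α p - α (b p)`.
Over `K` the same elimination shows that independence of the differences does not depend on the
representatives, and it passes to subsets of the columns. So the columns in `S` are independent as
soon as the non-representatives, `|S|` minus the number of blocks met by `S`, number at most the
`s + 1` Moore rows. If there were more, `|S| = l + s + 2 - ⌈k/r⌉` would force `S` to meet at most
`l - ⌈k/r⌉` blocks, hence to have at most `(l - ⌈k/r⌉) r ≤ l r - k = s + 1` non-representatives.
-/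

open Finset Matrix Polynomial

section LinearizedPolynomial

variable {A : Type*} [Semiring A] {N : ℕ}

/-- The linearized polynomial `∑ e, v e * X ^ q ^ e`, which for `q = |K|` is `K`-linear as a
function. -/
noncomputable def linearizedPolynomial (q : ℕ) (v : Fin N → A) : A[X] :=
  ∑ e : Fin N, monomial (q ^ (e : ℕ)) (v e)

lemma coeff_linearizedPolynomial {q : ℕ} (hq : 1 < q) (v : Fin N → A) (e : Fin N) :
    (linearizedPolynomial q v).coeff (q ^ (e : ℕ)) = v e := by
  simp [linearizedPolynomial, coeff_monomial, Nat.pow_right_inj hq, Fin.val_inj]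

lemma natDegree_linearizedPolynomial_lt {q : ℕ} (hq : 1 < q) (v : Fin N → A) :
    (linearizedPolynomial q v).natDegree < q ^ N := by
  have hpos : 0 < q ^ N := by positivity
  rw [← Nat.le_sub_one_iff_lt hpos]
  refine natDegree_sum_le_of_forall_le _ _ fun e _ ↦ (natDegree_monomial_le _).trans ?_
  exact (Nat.le_sub_one_iff_lt hpos).2 (Nat.pow_lt_pow_right hq e.2)

end LinearizedPolynomial

section MooreMap

variable (K L : Type*) [Field K] [Fintype K] [CommRing L] [Algebra K L]

/-- The column `x ↦ (x, x^q, …, x^(q^(N-1)))` of a Moore matrix, where `q = |K|`, as a `K`-linear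
map. -/
noncomputable def mooreMap (N : ℕ) : L →ₗ[K] Fin N → L :=
  LinearMap.pi fun e ↦ (FiniteField.frobeniusAlgHom K L ^ (e : ℕ)).toLinearMap

variable {K L} {N : ℕ}

@[simp]
lemma mooreMap_apply (x : L) (e : Fin N) :
    mooreMap K L N x e = x ^ Fintype.card K ^ (e : ℕ) := by
  simp only [mooreMap, LinearMap.pi_apply, AlgHom.toLinearMap_apply, AlgHom.coe_pow,
    FiniteField.coe_frobeniusAlgHom, pow_iterate]

lemma eval_linearizedPolynomial (v : Fin N → L) (x : L) :
    (linearizedPolynomial (Fintype.card K) v).eval x = v ⬝ᵥ mooreMap K L N x := by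
  simp [linearizedPolynomial, eval_finsetSum, dotProduct]

variable [IsDomain L] {ι : Type*} [Fintype ι] {x : ι → L}

lemma eq_zero_of_forall_dotProduct_mooreMap_eq_zero (hx : LinearIndependent K x)
    (hN : N ≤ Fintype.card ι) {v : Fin N → L} (hv : ∀ i, v ⬝ᵥ mooreMap K L N (x i) = 0) :
    v = 0 := by
  classical
  have hq : 1 < Fintype.card K := Fintype.one_lt_card
  have hroot (a : ι → K) :
      (linearizedPolynomial (Fintype.card K) v).eval (Fintype.linearCombination K x a) = 0 := by
    simp [eval_linearizedPolynomial, Fintype.linearCombination_apply, dotProduct_sum, hv,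
      -mooreMap_apply]
  have hzero : linearizedPolynomial (Fintype.card K) v = 0 := by
    refine eq_zero_of_natDegree_lt_card_of_eval_eq_zero _
      hx.fintypeLinearCombination_injective hroot ?_
    rw [Fintype.card_fun]
    exact (natDegree_linearizedPolynomial_lt hq v).trans_le (Nat.pow_le_pow_right hq.le hN)
  ext e
  rw [← coeff_linearizedPolynomial hq v e, hzero, coeff_zero, Pi.zero_apply]

theorem linearIndependent_mooreMap (hx : LinearIndependent K x) (hN : Fintype.card ι ≤ N) :
    LinearIndependent L fun i ↦ mooreMap K L N (x i) := by
  let e := (Fintype.equivFin ι).symm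
  let M : Matrix (Fin (Fintype.card ι)) (Fin (Fintype.card ι)) L :=
    .of fun i ↦ mooreMap K L _ (x (e i))
  have hdet : M.det ≠ 0 := by
    refine mt exists_mulVec_eq_zero_iff.2 ?_
    rintro ⟨v, hv0, hv⟩
    refine hv0 (eq_zero_of_forall_dotProduct_mooreMap_eq_zero (hx.comp e e.injective) (by simp)
      fun i ↦ ?_)
    rw [dotProduct_comm]
    exact congrFun hv i
  refine .of_comp (LinearMap.funLeft L L (Fin.castLE hN)) ((linearIndependent_equiv e).1 ?_)
  convert linearIndependent_rows_of_det_ne_zero hdet using 1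
  ext i j
  simp [M, LinearMap.funLeft_apply]

end MooreMap

section BlockDifferences

variable {R M σ ι : Type*} [Ring R] [AddCommGroup M] [Module R M]

lemma linearIndependent_sub_of_idempotent {v : σ → M} {ρ : σ → σ} (hρ : ∀ p, ρ (ρ p) = ρ p)
    (hv : LinearIndependent R v) :
    LinearIndependent R fun p : {p // p ≠ ρ p} ↦ v p - v (ρ p) := by
  classical
  let u (p : {p // p ≠ ρ p}) : σ →₀ R := .single (p : σ) 1 - .single (ρ p) 1
  let restrict : (σ →₀ R) →ₗ[R] {p // p ≠ ρ p} →₀ R := Finsupp.lsubtypeDomain {p | p ≠ ρ p}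
  have hu_restrict : restrict ∘ u = fun p ↦ .single p 1 := by
    ext p p'
    have hne : ρ p ≠ p' := fun h ↦ p'.2 (by rw [← h, hρ])
    change u p p' = _
    simp [u, Finsupp.single_apply, hne, Subtype.ext_iff]
  have hu : LinearIndependent R u :=
    .of_comp restrict (hu_restrict ▸ Finsupp.linearIndependent_single_one R _)
  simpa [u, Function.comp_def] using
    hu.map' (Finsupp.linearCombination R v) (LinearMap.ker_eq_bot.2 hv)

lemma card_ne_add_card_image [Fintype σ] [DecidableEq σ] [DecidableEq ι] {π : σ → ι} {b : ι → σ}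
    (hb : ∀ p, π (b (π p)) = π p) :
    Fintype.card {p // p ≠ b (π p)} + #(univ.image π) = Fintype.card σ := by
  have hreps : #(univ.image π) = #{p | p = b (π p)} := by
    have himage : univ.image (b ∘ π) = ({p | p = b (π p)} : Finset σ) := by
      ext p
      simp only [mem_image, mem_univ, true_and, Function.comp_apply, mem_filter]
      exact ⟨by rintro ⟨p, rfl⟩; rw [hb], fun hp ↦ ⟨p, hp.symm⟩⟩
    rw [← himage, ← image_image]
    refine (card_image_of_injOn ?_).symm
    intro i hi j hj hij
    simp only [coe_image, coe_univ, Set.image_univ, Set.mem_range] at hi hj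
    obtain ⟨⟨p, rfl⟩, p', rfl⟩ := hi, hj
    rw [← hb p, hij, hb]
  rw [hreps, Fintype.card_subtype, add_comm]
  exact card_filter_add_card_filter_not _

variable [DecidableEq ι] {π : σ → ι} {f : σ → M} {b : ι → σ}

variable (R) in
/-- The vectors `f p` extended by the indicator vector of the block `π p` of `p`.
For Moore columns `f` these are the columns of `H`. Over `K`, with `f = α`, their independence means
that of the differences of `α` within the blocks, without singling out a representative. -/
def withBlockIndicator (π : σ → ι) (f : σ → M) (p : σ) : (ι → R) × M :=
  (Pi.single (π p) 1, f p)

lemma linearIndependent_sub_of_withBlockIndicator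
    (h : LinearIndependent R (withBlockIndicator R π f)) (hb : ∀ p, π (b (π p)) = π p) :
    LinearIndependent R fun p : {p // p ≠ b (π p)} ↦ f p - f (b (π p)) := by
  refine .of_comp (LinearMap.inr R (ι → R) M) ?_
  simpa [withBlockIndicator, hb, Function.comp_def] using
    linearIndependent_sub_of_idempotent (ρ := fun p ↦ b (π p)) (by simp [hb]) h

lemma linearIndependent_withBlockIndicator [Finite σ]
    (h : LinearIndependent R fun p : {p // p ≠ b (π p)} ↦ f p - f (b (π p))) :
    LinearIndependent R (withBlockIndicator R π f) := by
  classical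
  cases nonempty_fintype σ
  rw [Fintype.linearIndependent_iff] at h ⊢
  intro c hc
  have hf : ∑ p, c p • f p = 0 := by
    simpa [withBlockIndicator, Prod.snd_sum] using congrArg Prod.snd hc
  have hblock (i : ι) : ∑ p with π p = i, c p = 0 := by
    simpa [withBlockIndicator, Prod.fst_sum, Pi.single_apply, sum_filter, eq_comm] using
      congrFun (congrArg Prod.fst hc) i
  have hrep : ∑ p, c p • f (b (π p)) = 0 := by
    rw [← sum_fiberwise_of_maps_to fun p _ ↦ mem_image_of_mem π (mem_univ p)]
    refine sum_eq_zero fun i _ ↦ ?_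
    rw [sum_congr rfl fun p hp ↦ by rw [(mem_filter.1 hp).2], ← sum_smul, hblock, zero_smul]
  have hne (p : σ) (hp : p ≠ b (π p)) : c p = 0 := by
    refine h (fun p ↦ c p) ?_ ⟨p, hp⟩
    calc ∑ p : {p // p ≠ b (π p)}, c p • (f p - f (b (π p)))
      _ = ∑ p with p ≠ b (π p), c p • (f p - f (b (π p))) :=
        (sum_subtype _ (by simp) fun p ↦ c p • (f p - f (b (π p)))).symm
      _ = ∑ p, c p • (f p - f (b (π p))) :=
        sum_filter_of_ne fun p _ h0 hp ↦ h0 (by rw [← hp, sub_self, smul_zero])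
      _ = 0 := by simp only [smul_sub, sum_sub_distrib, hf, hrep, sub_zero]
  intro p
  by_cases hp : p = b (π p)
  · rw [← hblock (π p), sum_eq_single_of_mem p (by simp)]
    intro p' hp' hpp'
    exact hne p' (by rwa [(mem_filter.1 hp').2, ← hp])
  · exact hne p hp

lemma linearIndependent_withBlockIndicator_of_castSucc_sub_last [Finite ι] {r : ℕ}
    {f : ι → Fin (r + 1) → M}
    (h : LinearIndependent R fun p : ι × Fin r ↦ f p.1 p.2.castSucc - f p.1 (Fin.last r)) :
    LinearIndependent R (withBlockIndicator R Prod.fst fun p : ι × Fin (r + 1) ↦ f p.1 p.2) := by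
  refine linearIndependent_withBlockIndicator (b := fun i ↦ (i, Fin.last r)) ?_
  have hlast (p : {p : ι × Fin (r + 1) // p ≠ (p.1, Fin.last r)}) : p.1.2 ≠ Fin.last r :=
    fun hp ↦ p.2 (Prod.ext rfl hp)
  let g (p : {p : ι × Fin (r + 1) // p ≠ (p.1, Fin.last r)}) : ι × Fin r :=
    (p.1.1, p.1.2.castPred (hlast p))
  have hg : Function.Injective g := fun p p' hpp' ↦ by
    simpa [g, Prod.ext_iff, Subtype.ext_iff] using hpp'
  simpa [g, Function.comp_def] using h.comp g hg

end BlockDifferences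

section ParityCheck

variable {K L : Type*} [Field K] [Fintype K] [CommRing L] [IsDomain L] [Algebra K L]

theorem linearIndependent_withBlockIndicator_mooreMap {σ ι : Type*} [Fintype σ] [DecidableEq ι]
    {π : σ → ι} {α : σ → L} {N : ℕ}
    (hα : LinearIndependent K (withBlockIndicator K π α))
    (hcard : Fintype.card σ ≤ #(univ.image π) + N) :
    LinearIndependent L (withBlockIndicator L π fun p ↦ mooreMap K L N (α p)) := by
  classical
  cases isEmpty_or_nonempty σ
  · exact linearIndependent_empty_type
  have hb (p : σ) : π (Function.invFun π (π p)) = π p := Function.invFun_eq ⟨p, rfl⟩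
  refine linearIndependent_withBlockIndicator (b := Function.invFun π) ?_
  have hdiff := linearIndependent_sub_of_withBlockIndicator hα hb
  have hN := card_ne_add_card_image hb
  simpa only [map_sub] using linearIndependent_mooreMap (N := N) hdiff (by omega)

lemma card_le_card_image_fst_add {ι : Type*} [DecidableEq ι] {l r k s : ℕ} (hr : 0 < r)
    (hk : k + (s + 1) = l * r)
    (S : Finset (ι × Fin (r + 1))) (hS : (#S : ℤ) ≤ l + s + 2 - ⌈(k : ℚ) / r⌉) :
    #S ≤ #(S.image Prod.fst) + (s + 1) := by
  by_contra! hlt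
  have hceil : (k : ℤ) ≤ ⌈(k : ℚ) / r⌉ * r := by
    have := (div_le_iff₀ (by exact_mod_cast hr)).1 (Int.le_ceil ((k : ℚ) / r))
    exact_mod_cast this
  have hblocks : (#(S.image Prod.fst) : ℤ) ≤ l - ⌈(k : ℚ) / r⌉ := by lia
  have hsize : #S ≤ #(S.image Prod.fst) * (r + 1) := by
    have hsub : S ⊆ S.image Prod.fst ×ˢ univ := fun p hp ↦ by simpa using ⟨p.2, hp⟩
    simpa using card_le_card hsub
  zify at hk hlt hsize
  nlinarith [mul_le_mul_of_nonneg_right hblocks (Int.natCast_nonneg r)]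

theorem stmt_12_general {l r s n k : ℕ} (hr : 1 ≤ r)
    (hn : n = l * (r + 1)) (hk : k + (l + s + 1) = n)
    (α : Fin l → Fin (r + 1) → L)
    (hind : LinearIndependent K
      (fun p : Fin l × Fin r => α p.1 p.2.castSucc - α p.1 (Fin.last r)))
    (H : Matrix (Fin l ⊕ Fin (s + 1)) (Fin l × Fin (r + 1)) L)
    (hH1 : ∀ (i' : Fin l) (p : Fin l × Fin (r + 1)),
      H (Sum.inl i') p = if p.1 = i' then 1 else 0)
    (hH2 : ∀ (e : Fin (s + 1)) (p : Fin l × Fin (r + 1)),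
      H (Sum.inr e) p = α p.1 p.2 ^ Fintype.card K ^ (e : ℕ))
    (S : Finset (Fin l × Fin (r + 1)))
    (hS : (S.card : ℤ) ≤ (n : ℤ) - k - ⌈(k : ℚ) / r⌉ + 1) :
    LinearIndependent L (fun p : {x // x ∈ S} => fun row => H row p.val) := by
  have hcard : #S ≤ #(S.image Prod.fst) + (s + 1) :=
    card_le_card_image_fst_add (k := k) (l := l) hr (by linarith) S (by lia)
  have hα : LinearIndependent K
      (withBlockIndicator K (fun p : S ↦ p.1.1) fun p ↦ α p.1.1 p.1.2) :=
    (linearIndependent_withBlockIndicator_of_castSucc_sub_last hind).comp _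
      Subtype.val_injective
  have hcols := linearIndependent_withBlockIndicator_mooreMap (N := s + 1) hα <| by
    have himage : univ.image (fun p : S ↦ p.1.1) = S.image Prod.fst := by
      ext i; simp
    rwa [himage, Fintype.card_coe]
  refine .of_comp (LinearEquiv.sumArrowLequivProdArrow _ _ L L).toLinearMap ?_
  convert hcols using 1
  ext p i <;> simp [withBlockIndicator, hH1, hH2, Pi.single_apply, eq_comm]

end ParityCheck

/-- Construction 1 (Lemma: distance property): any `n - k - ⌈k/r⌉ + 1` columns of the
parity-check matrix `H` built from locality rows and Moore-type rows of linearly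
independent differences are linearly independent. -/
theorem stmt_12 {K L : Type*} [Field K] [Fintype K] [Field L] [Fintype L] [Algebra K L]
    {l r s n k : ℕ} (hl : 1 ≤ l) (hr : 1 ≤ r)
    (hn : n = l * (r + 1)) (hk : k + (l + s + 1) = n) (hk1 : 1 ≤ k)
    (α : Fin l → Fin (r + 1) → L)
    (hind : LinearIndependent K
      (fun p : Fin l × Fin r => α p.1 p.2.castSucc - α p.1 (Fin.last r)))
    (H : Matrix (Fin l ⊕ Fin (s + 1)) (Fin l × Fin (r + 1)) L)
    (hH1 : ∀ (i' : Fin l) (p : Fin l × Fin (r + 1)),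
      H (Sum.inl i') p = if p.1 = i' then 1 else 0)
    (hH2 : ∀ (e : Fin (s + 1)) (p : Fin l × Fin (r + 1)),
      H (Sum.inr e) p = α p.1 p.2 ^ Fintype.card K ^ (e : ℕ))
    (S : Finset (Fin l × Fin (r + 1)))
    (hS : (S.card : ℤ) = (n : ℤ) - k - ⌈(k : ℚ) / r⌉ + 1) :
    LinearIndependent L (fun p : {x // x ∈ S} => fun row => H row p.val) :=
  stmt_12_general hr hn hk α hind H hH1 hH2 S hS.le
end
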